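/- Let N, K be positive integers with K ≥ N, let v, w : ℤ → ℂ be finitely supported with A_{v,w}(0,0) = 1, let D ≥ 0 and let r_0 = 1, d_0 = 0 and r_1,…,r_D ∈ ℂ, d_1,…,d_D ∈ ℤ be channel parameters. For each k ∈ ℤ and i ∈ ℤ let a_k[i] ∈ ℂ be a finitely supported array of symbols with a_{k+N}[i] = a_k[i]. Define the transmitted signal s[n] = ∑_{i∈ℤ} ∑_{k=0}^{N−1} a_k[i]·v[n−iK]·exp(2πi k(n−iK)/N), the received signal s_r[n] = ∑_{l=0}^{D} r_l·s[n−d_l], and the demultiplexed symbols ã_k[i] = ∑_{n∈ℤ} w[iK−n]·exp(2πi k(iK−n)/N)·s_r[n]. Then for every k ∈ {0,…,N−1} and i ∈ ℤ: ã_k[i] = a_k[i]·F_k + ∑_{(p,q)≠(0,0), 0≤p≤N−1, q∈ℤ} a_{k+p}[i+q]·I_k(p,q), where F_k = 1 + ∑_{l=1}^{D} r_l·exp(−2πi k d_l/N)·A_{v,w}(d_l,0) and I_k(p,q) = exp(−2πi (k+p)qK/N)·( A_{v,w}(qK, p) + ∑_{l=1}^{D} r_l·exp(−2πi (p+k)d_l/N)·A_{v,w}(qK+d_l,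 p) ). -/

import Mathlib

/-!
Write `e(t) = exp(2πi t/N)` (`chr`), a character of `ℤ` that is trivial on multiples of `N`. Substituting
`n ↦ iK + n` and `j = i + q` in the definition of `ã_k[i]` and exchanging the (finite) sums, the sum
over `n` that belongs to the path `l`, the carrier `m` and the frame `i + q` is
`r_l a_m[i+q] e(-m(d_l + qK)) A_{v,w}(qK + d_l, m - k)` (`tsum_demod_eq`). This is `N`-periodic in
`m`, so the sum over `0 ≤ m < N` may be replaced by the one over `m = k + p`, `0 ≤ p < N`
(`sum_fin_periodic_shift`). Splitting off the path `l = 0`, where `r_0 = 1` and `d_0 = 0`, and the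
term `(p, q) = (0, 0)`, where `A_{v,w}(0,0) = 1`, gives the claim.
-/

open Complex

/-- The crossambiguity function
`A_{v,w}(x,y) = ∑_{n∈ℤ} v[n−x]·w[−n]·exp(2πi y n/N)`. -/
noncomputable def crossamb (N : ℕ) (v w : ℤ → ℂ) (x y : ℤ) : ℂ :=
  ∑' n : ℤ, v (n - x) * w (-n) * Complex.exp (2 * Real.pi * Complex.I * (y : ℂ) * (n : ℂ) / N)

/-- The character `t ↦ exp(2πi t/N)` of `ℤ`. -/
noncomputable def chr (N : ℕ) (t : ℤ) : ℂ := Complex.exp (2 * Real.pi * Complex.I * (t : ℂ) / N)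

lemma chr_add (N : ℕ) (s t : ℤ) : chr N (s + t) = chr N s * chr N t := by
  unfold chr
  rw [← Complex.exp_add]
  congr 1
  push_cast
  ring

lemma chr_natCast_mul (N : ℕ) (hN : 0 < N) (t : ℤ) : chr N (N * t) = 1 := by
  unfold chr
  rw [Complex.exp_eq_one_iff]
  refine ⟨t, ?_⟩
  have : (N : ℂ) ≠ 0 := by exact_mod_cast hN.ne'
  push_cast
  field_simp

lemma crossamb_eq_chr (N : ℕ) (v w : ℤ → ℂ) (x y : ℤ) :
    crossamb N v w x y = ∑' n : ℤ, v (n - x) * w (-n) * chr N (y * n) := by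
  unfold crossamb chr
  refine tsum_congr fun n => ?_
  congr 2
  push_cast
  ring

lemma crossamb_add_period (N : ℕ) (hN : 0 < N) (v w : ℤ → ℂ) (x y : ℤ) :
    crossamb N v w x (y + N) = crossamb N v w x y := by
  simp only [crossamb_eq_chr, add_mul, chr_add, chr_natCast_mul N hN, mul_one]

lemma sum_fin_periodic_shift (N : ℕ) (f : ℤ → ℂ) (hf : ∀ m, f (m + N) = f m) (k : ℕ) :
    ∑ m : Fin N, f (m : ℤ) = ∑ p : Fin N, f ((k : ℤ) + (p : ℤ)) := by
  have h1 : ∀ g : ℤ → ℂ, ∑ m : Fin N, g (m : ℤ) = ∑ m ∈ Finset.range N, g (m : ℤ) :=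
    fun g => Fin.sum_univ_eq_sum_range (fun m : ℕ => g (m : ℤ)) N
  rw [h1 f, h1 fun p => f ((k : ℤ) + p)]
  induction k with
  | zero => simp
  | succ k ih =>
    rw [ih]
    have h2 := Finset.sum_range_succ (fun m : ℕ => f ((k : ℤ) + (m : ℤ))) N
    rw [Finset.sum_range_succ', hf k] at h2
    simp only [Nat.cast_zero, add_zero] at h2
    rw [← add_right_cancel h2]
    refine Finset.sum_congr rfl fun m _ => ?_
    congr 1
    push_cast
    ring

lemma summable_w_mul (w : ℤ → ℂ) (hw : (Function.support w).Finite) (g : ℤ → ℂ) :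
    Summable fun n : ℤ => w (-n) * g n := by
  refine summable_of_hasFiniteSupport ?_
  refine (hw.preimage (f := fun n : ℤ => -n) neg_injective.injOn).subset fun n hn => ?_
  exact left_ne_zero_of_mul (Function.mem_support.mp hn)

/-- The contribution to `ã_k` of a single path and a single symbol: `c` is the path gain times the
symbol, `m` its carrier, and `x` its total delay (frame offset plus path delay) relative to the
observed frame. -/
lemma tsum_demod_eq (N : ℕ) (v w : ℤ → ℂ) (k m x : ℤ) (c : ℂ) :
    ∑' n : ℤ, w (-n) * (chr N (k * -n) * (c * (v (n - x) * chr N (m * (n - x))))) =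
      c * chr N (-(m * x)) * crossamb N v w x (m - k) := by
  rw [crossamb_eq_chr, ← tsum_mul_left]
  refine tsum_congr fun n => ?_
  have h1 : m * (n - x) = m * n + -(m * x) := by ring
  have h2 : (m - k) * n = m * n + k * -n := by ring
  rw [h1, h2, chr_add, chr_add]
  ring

/-- The demultiplexed symbol as one sum over frames `q` (relative to `i`), carriers `m` and
paths `l`. -/
lemma demod_expansion (N K : ℕ) (v w : ℤ → ℂ) (hw : (Function.support w).Finite)
    (D : ℕ) (r : ℕ → ℂ) (d : ℕ → ℤ) (a : ℤ → ℤ → ℂ)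
    (hafin : ∀ k : ℤ, (Function.support (a k)).Finite) (k i : ℤ) :
    ∑' n : ℤ, w (i * K - n) * chr N (k * (i * K - n)) *
        ∑ l ∈ Finset.range (D + 1), r l * ∑' j : ℤ, ∑ m : Fin N,
          a (m : ℤ) j * (v (n - d l - j * K) * chr N (m * (n - d l - j * K))) =
      ∑' q : ℤ, ∑ m : Fin N, a (m : ℤ) (i + q) * ∑ l ∈ Finset.range (D + 1),
        r l * chr N (-(m * (q * K + d l))) * crossamb N v w (q * K + d l) (m - k) := by
  -- a finite set of relative frame indices outside which all symbols vanish
  have hfin : (⋃ m : Fin N, (fun q : ℤ => i + q) ⁻¹' Function.support (a (m : ℤ))).Finite :=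
    Set.finite_iUnion fun m => (hafin m).preimage (add_right_injective i).injOn
  have hz : ∀ q ∉ hfin.toFinset, ∀ m : Fin N, a (m : ℤ) (i + q) = 0 := by
    intro q hq m
    by_contra h
    exact hq (hfin.mem_toFinset.mpr (Set.mem_iUnion.mpr ⟨m, h⟩))
  generalize hfin.toFinset = J at hz
  have hin : ∀ n l, (∑' j : ℤ, ∑ m : Fin N,
      a (m : ℤ) j * (v (i * K + n - d l - j * K) * chr N (m * (i * K + n - d l - j * K)))) =
      ∑ q ∈ J, ∑ m : Fin N, a (m : ℤ) (i + q) *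
        (v (n - (q * K + d l)) * chr N (m * (n - (q * K + d l)))) := by
    intro n l
    rw [← (Equiv.addLeft i).tsum_eq, tsum_eq_sum (s := J)]
    · refine Finset.sum_congr rfl fun q _ => Finset.sum_congr rfl fun m _ => ?_
      have : i * K + n - d l - (i + q) * K = n - (q * K + d l) := by ring
      simp only [Equiv.coe_addLeft, this]
    · intro q hq
      refine Finset.sum_eq_zero fun m _ => ?_
      simp only [Equiv.coe_addLeft, hz q hq m, zero_mul]
  have hout : (∑' q : ℤ, ∑ m : Fin N, a (m : ℤ) (i + q) * ∑ l ∈ Finset.range (D + 1),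
        r l * chr N (-(m * (q * K + d l))) * crossamb N v w (q * K + d l) (m - k)) =
      ∑ q ∈ J, ∑ m : Fin N, a (m : ℤ) (i + q) * ∑ l ∈ Finset.range (D + 1),
        r l * chr N (-(m * (q * K + d l))) * crossamb N v w (q * K + d l) (m - k) :=
    tsum_eq_sum fun q hq => Finset.sum_eq_zero fun m _ => by rw [hz q hq m, zero_mul]
  rw [← (Equiv.addLeft (i * (K : ℤ))).tsum_eq, hout]
  have hsub : ∀ n : ℤ, i * (K : ℤ) - (i * K + n) = -n := fun n => by ring
  simp only [Equiv.coe_addLeft, hin, hsub]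
  calc _ = ∑' n : ℤ, ∑ l ∈ Finset.range (D + 1), ∑ q ∈ J, ∑ m : Fin N,
        w (-n) * (chr N (k * -n) * ((r l * a (m : ℤ) (i + q)) *
          (v (n - (q * K + d l)) * chr N (m * (n - (q * K + d l)))))) := by
        refine tsum_congr fun n => ?_
        simp only [Finset.mul_sum]
        refine Finset.sum_congr rfl fun l _ => Finset.sum_congr rfl fun q _ =>
          Finset.sum_congr rfl fun m _ => ?_
        ring
    _ = ∑ l ∈ Finset.range (D + 1), ∑ q ∈ J, ∑ m : Fin N,
        (r l * a (m : ℤ) (i + q)) * chr N (-(m * (q * K + d l))) *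
          crossamb N v w (q * K + d l) (m - k) := by
        have hS := fun (g : ℤ → ℂ) => summable_w_mul w hw g
        rw [Summable.tsum_finsetSum fun l _ => summable_sum fun q _ => summable_sum fun m _ => hS _]
        refine Finset.sum_congr rfl fun l _ => ?_
        rw [Summable.tsum_finsetSum fun q _ => summable_sum fun m _ => hS _]
        refine Finset.sum_congr rfl fun q _ => ?_
        rw [Summable.tsum_finsetSum fun m _ => hS _]
        exact Finset.sum_congr rfl fun m _ => tsum_demod_eq N v w k m _ _
    _ = _ := by
        rw [Finset.sum_comm]
        refine Finset.sum_congr rfl fun q _ => ?_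
        rw [Finset.sum_comm]
        refine Finset.sum_congr rfl fun m _ => ?_
        rw [Finset.mul_sum]
        exact Finset.sum_congr rfl fun l _ => by ring

/-- Decomposition of the demultiplexed symbols of an OFDM
transmission over a multipath channel into a faded symbol plus interference:
with transmitted signal `s[n] = ∑_{i}∑_{k<N} a_k[i]·v[n−iK]·exp(2πi k(n−iK)/N)`,
received signal `s_r[n] = ∑_{l=0}^{D} r_l·s[n−d_l]` (where `r_0 = 1`, `d_0 = 0`),
and demultiplexed symbols `ã_k[i] = ∑_n w[iK−n]·exp(2πi k(iK−n)/N)·s_r[n]`,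
one has, for every `k ∈ {0,…,N−1}` and `i ∈ ℤ`,
`ã_k[i] = a_k[i]·F_k + ∑_{(p,q)≠(0,0)} a_{k+p}[i+q]·I_k(p,q)` with
`F_k = 1 + ∑_{l=1}^{D} r_l·exp(−2πi k d_l/N)·A_{v,w}(d_l,0)` and
`I_k(p,q) = exp(−2πi (k+p)qK/N)·(A_{v,w}(qK,p) +
∑_{l=1}^{D} r_l·exp(−2πi (p+k)d_l/N)·A_{v,w}(qK+d_l,p))`. -/
theorem stmt15
    (N K : ℕ) (hN : 0 < N) (hNK : N ≤ K)
    (v w : ℤ → ℂ) (hv : (Function.support v).Finite) (hw : (Function.support w).Finite)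
    (hA00 : crossamb N v w 0 0 = 1)
    (D : ℕ) (r : ℕ → ℂ) (d : ℕ → ℤ) (hr0 : r 0 = 1) (hd0 : d 0 = 0)
    (a : ℤ → ℤ → ℂ)
    (hafin : ∀ k : ℤ, (Function.support (a k)).Finite)
    (haper : ∀ k i : ℤ, a (k + N) i = a k i)
    (s : ℤ → ℂ)
    (hs : ∀ n : ℤ,
        s n = ∑' i : ℤ, ∑ k : Fin N,
          a (k : ℤ) i *
            (v (n - i * K) *
              Complex.exp (2 * Real.pi * Complex.I * ((k : ℕ) : ℂ) * ((n - i * (K : ℤ) : ℤ) : ℂ) / N)))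
    (sr : ℤ → ℂ)
    (hsr : ∀ n : ℤ, sr n = ∑ l ∈ Finset.range (D + 1), r l * s (n - d l))
    (atil : Fin N → ℤ → ℂ)
    (hatil : ∀ (k : Fin N) (i : ℤ),
        atil k i = ∑' n : ℤ,
          w (i * K - n) *
              Complex.exp (2 * Real.pi * Complex.I * ((k : ℕ) : ℂ) * ((i * (K : ℤ) - n : ℤ) : ℂ) / N) *
            sr n) :
    ∀ (k : Fin N) (i : ℤ),
      atil k i =
        a (k : ℤ) i *
            (1 + ∑ l ∈ Finset.Icc 1 D,
              r l *
                  Complex.exp (-(2 * Real.pi * Complex.I) * ((k : ℕ) : ℂ) * ((d l : ℤ) : ℂ) / N) *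
                crossamb N v w (d l) 0) +
          ∑' q : ℤ, ∑ p : Fin N,
            (if (p : ℤ) = 0 ∧ q = 0 then 0
              else
                a ((k : ℤ) + (p : ℤ)) (i + q) *
                  (Complex.exp (-(2 * Real.pi * Complex.I) * (((k : ℕ) : ℂ) + ((p : ℕ) : ℂ)) * (q : ℂ) * (K : ℂ) / N) *
                    (crossamb N v w (q * K) (p : ℤ) +
                      ∑ l ∈ Finset.Icc 1 D,
                        r l *
                            Complex.exp (-(2 * Real.pi * Complex.I) * (((p : ℕ) : ℂ) + ((k : ℕ) : ℂ)) * ((d l : ℤ) : ℂ) / N) *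
                          crossamb N v w (q * K + d l) (p : ℤ)))) := by
  intro k i
  have hs' : ∀ n : ℤ, s n = ∑' j : ℤ, ∑ m : Fin N,
      a (m : ℤ) j * (v (n - j * K) * chr N (m * (n - j * K))) := by
    intro n
    rw [hs]
    refine tsum_congr fun j => Finset.sum_congr rfl fun m _ => ?_
    unfold chr
    congr 3
    push_cast
    ring
  have hw' : ∀ n : ℤ, Complex.exp (2 * Real.pi * Complex.I * ((k : ℕ) : ℂ) *
      ((i * (K : ℤ) - n : ℤ) : ℂ) / N) = chr N ((k : ℤ) * (i * K - n)) := by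
    intro n
    unfold chr
    congr 1
    push_cast
    ring
  rw [hatil]
  simp only [hw', hsr, hs']
  rw [demod_expansion N K v w hw D r d a hafin k i]
  have hper : ∀ q : ℤ, (∑ m : Fin N, a (m : ℤ) (i + q) * ∑ l ∈ Finset.range (D + 1),
        r l * chr N (-(m * (q * K + d l))) * crossamb N v w (q * K + d l) (m - k)) =
      ∑ p : Fin N, a ((k : ℤ) + (p : ℤ)) (i + q) * ∑ l ∈ Finset.range (D + 1),
        r l * chr N (-(((k : ℤ) + (p : ℤ)) * (q * K + d l))) *
          crossamb N v w (q * K + d l) p := by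
    intro q
    rw [sum_fin_periodic_shift N (fun m => a m (i + q) * ∑ l ∈ Finset.range (D + 1),
        r l * chr N (-(m * (q * K + d l))) * crossamb N v w (q * K + d l) (m - k)) _ (k : ℕ)]
    · simp only [add_sub_cancel_left]
    · intro m
      have h1 : ∀ x : ℤ, chr N (-((m + N) * x)) = chr N (-(m * x)) := by
        intro x
        have : -((m + N) * x) = -(m * x) + N * (-x) := by ring
        rw [this, chr_add, chr_natCast_mul N hN, mul_one]
      have h2 : m + N - (k : ℤ) = m - k + N := by ring
      simp only [haper, h1, h2, crossamb_add_period N hN]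
  -- separate the direct path `l = 0` from the others
  have hterm : ∀ (q : ℤ) (p : Fin N), (∑ l ∈ Finset.range (D + 1),
        r l * chr N (-(((k : ℤ) + (p : ℤ)) * (q * K + d l))) *
          crossamb N v w (q * K + d l) p) =
      Complex.exp (-(2 * Real.pi * Complex.I) * (((k : ℕ) : ℂ) + ((p : ℕ) : ℂ)) * (q : ℂ) *
        (K : ℂ) / N) * (crossamb N v w (q * K) (p : ℤ) + ∑ l ∈ Finset.Icc 1 D, r l *
          Complex.exp (-(2 * Real.pi * Complex.I) * (((p : ℕ) : ℂ) + ((k : ℕ) : ℂ)) *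
            ((d l : ℤ) : ℂ) / N) * crossamb N v w (q * K + d l) (p : ℤ)) := by
    intro q p
    have h1 : Complex.exp (-(2 * Real.pi * Complex.I) * (((k : ℕ) : ℂ) + ((p : ℕ) : ℂ)) *
        (q : ℂ) * (K : ℂ) / N) = chr N (-(((k : ℤ) + (p : ℤ)) * (q * K))) := by
      unfold chr
      congr 1
      push_cast
      ring
    have h2 : ∀ l, Complex.exp (-(2 * Real.pi * Complex.I) * (((p : ℕ) : ℂ) + ((k : ℕ) : ℂ)) *
        ((d l : ℤ) : ℂ) / N) = chr N (-(((k : ℤ) + (p : ℤ)) * d l)) := by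
      intro l
      unfold chr
      congr 1
      push_cast
      ring
    have hIcc : Finset.range (D + 1) = insert 0 (Finset.Icc 1 D) := by
      ext l
      simp only [Finset.mem_range, Finset.mem_insert, Finset.mem_Icc]
      omega
    rw [hIcc, Finset.sum_insert (by simp), hr0, hd0, add_zero, one_mul, mul_add, h1,
      Finset.mul_sum]
    congr 1
    refine Finset.sum_congr rfl fun l _ => ?_
    rw [h2, mul_add, neg_add, chr_add]
    ring
  simp only [hper, hterm]
  set G : ℤ → Fin N → ℂ := fun q p =>
      Complex.exp (-(2 * Real.pi * Complex.I) * (((k : ℕ) : ℂ) + ((p : ℕ) : ℂ)) * (q : ℂ) *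
        (K : ℂ) / N) * (crossamb N v w (q * K) (p : ℤ) + ∑ l ∈ Finset.Icc 1 D, r l *
          Complex.exp (-(2 * Real.pi * Complex.I) * (((p : ℕ) : ℂ) + ((k : ℕ) : ℂ)) *
            ((d l : ℤ) : ℂ) / N) * crossamb N v w (q * K + d l) (p : ℤ)) with hG
  have hG0 : G 0 ⟨0, hN⟩ = 1 + ∑ l ∈ Finset.Icc 1 D, r l *
      Complex.exp (-(2 * Real.pi * Complex.I) * ((k : ℕ) : ℂ) * ((d l : ℤ) : ℂ) / N) *
        crossamb N v w (d l) 0 := by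
    simp [hG, hA00]
  rw [← hG0]
  change (∑' q : ℤ, ∑ p : Fin N, a ((k : ℤ) + (p : ℤ)) (i + q) * G q p) =
    _ + ∑' q : ℤ, ∑ p : Fin N, (if (p : ℤ) = 0 ∧ q = 0 then 0 else
      a ((k : ℤ) + (p : ℤ)) (i + q) * G q p)
  have hsum : Summable fun q : ℤ => ∑ p : Fin N, (if (p : ℤ) = 0 ∧ q = 0 then 0 else
      a ((k : ℤ) + (p : ℤ)) (i + q) * G q p) := by
    refine summable_sum fun p _ => summable_of_hasFiniteSupport ?_
    refine ((hafin ((k : ℤ) + (p : ℤ))).preimage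
      (f := fun q : ℤ => i + q) (add_right_injective i).injOn).subset fun q hq => ?_
    rw [Function.mem_support] at hq
    split_ifs at hq
    · exact absurd rfl hq
    · exact left_ne_zero_of_mul hq
  have hdelta : HasSum (fun q : ℤ => if q = 0 then a (k : ℤ) i * G 0 ⟨0, hN⟩ else 0)
      (a (k : ℤ) i * G 0 ⟨0, hN⟩) := hasSum_ite_eq 0 _
  rw [← (hdelta.add hsum.hasSum).tsum_eq]
  refine tsum_congr fun q => ?_
  by_cases hq : q = 0
  · subst hq
    rw [← Finset.add_sum_erase _ _ (Finset.mem_univ (⟨0, hN⟩ : Fin N)),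
      ← Finset.add_sum_erase _ (fun p : Fin N => if (p : ℤ) = 0 ∧ (0 : ℤ) = 0 then (0 : ℂ) else
        a ((k : ℤ) + (p : ℤ)) (i + 0) * G 0 p) (Finset.mem_univ (⟨0, hN⟩ : Fin N))]
    simp only [Nat.cast_zero, add_zero, and_self, if_true, zero_add]
    congr 1
    refine Finset.sum_congr rfl fun p hp => ?_
    have hp0 : ¬ ((p : ℕ) : ℤ) = 0 := by
      intro h
      exact Finset.ne_of_mem_erase hp (Fin.ext (by exact_mod_cast h))
    rw [if_neg fun h => hp0 h.1]
  · simp [hq]
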